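/- If α ∈ (0,1) is a 0''-left-c.e. real and c ∈ ℕ satisfies α + 2^{-c} < 1, then there exist an oracle machine M and a string ρ of length c such that M(σ,n) is undefined for every n and every string σ compatible with ρ, and μ(COF(M)) = α. Similarly, if α ∈ (0,1) is 0''-left-c.e. and 2^{-c} < α, then there exist an oracle machine M' and a string ρ' of length c such that M'(σ,n) is undefined for every σ compatible with ρ' and every n, and μ(COM(M')) = α. -/

import Mathlib

open scoped Classical
open MeasureTheory

namespace RandProb

/-- Cantor space: the space of infinite binary sequences. -/
abbrev Cantor := ℕ → Bool

/-! ### Oracle partial recursive functions, via codes -/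

/-- Codes for partial recursive functions with access to an oracle `O : ℕ → ℕ`.
These codes play the role of (oracle) Turing machines. -/
inductive CodeO : Type
  | zero : CodeO
  | succ : CodeO
  | left : CodeO
  | right : CodeO
  | oracle : CodeO
  | pair : CodeO → CodeO → CodeO
  | comp : CodeO → CodeO → CodeO
  | prec : CodeO → CodeO → CodeO
  | rfind' : CodeO → CodeO

/-- Evaluation of an oracle code with (total) oracle `O`. -/
def CodeO.eval (O : ℕ → ℕ) : CodeO → ℕ →. ℕ
  | .zero => pure 0
  | .succ => Nat.succ
  | .left => ↑fun n : ℕ => n.unpair.1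
  | .right => ↑fun n : ℕ => n.unpair.2
  | .oracle => ↑fun n : ℕ => O n
  | .pair cf cg => fun n => Nat.pair <$> cf.eval O n <*> cg.eval O n
  | .comp cf cg => fun n => cg.eval O n >>= cf.eval O
  | .prec cf cg =>
    Nat.unpaired fun a n =>
      n.rec (cf.eval O a) fun y IH => do
        let i ← IH
        cg.eval O (Nat.pair a (Nat.pair y i))
  | .rfind' cf =>
    Nat.unpaired fun a m =>
      (Nat.rfind fun n => (fun m => m = 0) <$> cf.eval O (Nat.pair a (n + m))).map (· + m)

/-- A canonical injective numbering of oracle codes. -/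
def CodeO.encode : CodeO → ℕ
  | .zero => 0
  | .succ => 1
  | .left => 2
  | .right => 3
  | .oracle => 4
  | .pair cf cg => 2 * (2 * Nat.pair cf.encode cg.encode) + 5
  | .comp cf cg => 2 * (2 * Nat.pair cf.encode cg.encode + 1) + 5
  | .prec cf cg => 2 * (2 * Nat.pair cf.encode cg.encode) + 6
  | .rfind' cf => 2 * (2 * cf.encode + 1) + 6

/-- The Turing jump of an oracle: the halting problem relative to `O`,
as a `{0,1}`-valued function. -/
noncomputable def jump (O : ℕ → ℕ) : ℕ → ℕ := fun e =>
  if ∃ c : CodeO, c.encode = e ∧ (c.eval O e).Dom then 1 else 0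

/-- `iterJump n` is `∅^(n)`, the `n`-th iterate of the halting problem (as an oracle). -/
noncomputable def iterJump : ℕ → ℕ → ℕ
  | 0 => fun _ => 0
  | n + 1 => jump (iterJump n)

/-- `S ⊆ ℕ` is computably enumerable relative to the oracle `O`. -/
def CeIn (O : ℕ → ℕ) (S : Set ℕ) : Prop := ∃ c : CodeO, S = {m | (c.eval O m).Dom}

/-- The left Dedekind cut of `α` (as a set of codes of rationals) is c.e. in `O`. -/
def LeftCeIn (O : ℕ → ℕ) (α : ℝ) : Prop :=
  CeIn O {m | ∃ q : ℚ, Encodable.encode q = m ∧ (q : ℝ) < α}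

/-- The right Dedekind cut of `α` (as a set of codes of rationals) is c.e. in `O`. -/
def RightCeIn (O : ℕ → ℕ) (α : ℝ) : Prop :=
  CeIn O {m | ∃ q : ℚ, Encodable.encode q = m ∧ α < (q : ℝ)}

/-! ### Martin-Löf randomness for real numbers -/

/-- The `i`-th component of a Martin-Löf test coded by the set `W ⊆ ℕ`:
the union of all open rational intervals whose codes are enumerated into the
`i`-th section of `W`. -/
def testSet (W : Set ℕ) (i : ℕ) : Set ℝ :=
  {x | ∃ p q : ℚ, Nat.pair i (Encodable.encode (p, q)) ∈ W ∧ (p : ℝ) < x ∧ x < (q : ℝ)}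

/-- `α` is Martin-Löf random relative to the oracle `O`. -/
def MLRandomIn (O : ℕ → ℕ) (α : ℝ) : Prop :=
  ∀ W : Set ℕ, CeIn O W →
    (∀ i, volume (testSet W i) ≤ ENNReal.ofReal ((2 : ℝ)⁻¹ ^ i)) →
    ∃ i, α ∉ testSet W i

/-- `α` is `n`-random: Martin-Löf random relative to `∅^(n-1)`. -/
def NRandom (n : ℕ) (α : ℝ) : Prop := MLRandomIn (iterJump (n - 1)) α

/-! ### The uniform measure on Cantor space -/

/-- The binary digits of a real number (meaningful on `[0,1)`). -/
noncomputable def digits (x : ℝ) : Cantor := fun n => decide (⌊x * 2 ^ (n + 1)⌋ % 2 = 1)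

/-- The uniform (Lebesgue) product measure on Cantor space, obtained as the
pushforward of Lebesgue measure on `[0,1)` under the binary-digit map. -/
noncomputable def mu : Measure Cantor :=
  Measure.map digits (volume.restrict (Set.Ico (0 : ℝ) 1))

/-- The uniform measure of a set of elements of Cantor space, as a real number. -/
noncomputable def muR (S : Set Cantor) : ℝ := (mu S).toReal

/-! ### Strings, prefixes and cylinders -/

/-- The length-`n` initial segment of `X ∈ 2^ω`, as a finite binary string. -/
def initSeg (X : Cantor) (n : ℕ) : List Bool := (List.range n).map X

/-- `⟦S⟧`: the elements of Cantor space having a prefix in the set of strings `S`. -/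
def cyl (S : Set (List Bool)) : Set Cantor := {X | ∃ n, initSeg X n ∈ S}

/-- A set of strings is prefix-free if none of its elements properly extends another. -/
def IsPrefixFree (S : Set (List Bool)) : Prop := ∀ σ ∈ S, ∀ τ ∈ S, σ <+: τ → σ = τ

/-- A set of strings is upward closed if it is closed under taking extensions. -/
def UpClosed (S : Set (List Bool)) : Prop := ∀ σ ∈ S, ∀ τ, σ <+: τ → τ ∈ S

/-- Two strings are compatible if one is a prefix of the other. -/
def Compatible (σ τ : List Bool) : Prop := σ <+: τ ∨ τ <+: σ

/-! ### Oracle machines -/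

/-- An element of Cantor space viewed as a `{0,1}`-valued oracle. -/
def oX (X : Cantor) : ℕ → ℕ := fun n => cond (X n) 1 0

/-- `evalO X c n`: the (possibly divergent) output of the oracle machine `c`
on input `n` with oracle `X`. -/
def evalO (X : Cantor) (c : CodeO) (n : ℕ) : Part ℕ := c.eval (oX X) n

/-- The oracle obtained by writing the string `ρ` before the bits of `X`. -/
def prepend (ρ : List Bool) (X : Cantor) : Cantor := fun n =>
  if n < ρ.length then ρ.getD n false else X (n - ρ.length)

/-- `X ∈ 2^ω` extends the finite string `ρ`. -/
def Extends (X : Cantor) (ρ : List Bool) : Prop := initSeg X ρ.length = ρ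

/-- `u` is a universal oracle machine: some effective, prefix-free translation
`c ↦ σ_c` satisfies `u(σ_c * X, n) ≃ c(X, n)` for all machines `c`. -/
def UniversalOM (u : CodeO) : Prop :=
  ∃ σ : CodeO → List Bool,
    (∃ f : ℕ → ℕ, Computable f ∧ ∀ c : CodeO, f c.encode = Encodable.encode (σ c)) ∧
    IsPrefixFree (Set.range σ) ∧
    ∀ (c : CodeO) (X : Cantor) (n : ℕ), evalO (prepend (σ c) X) u n = evalO X c n

/-- `TOT(c)`: the oracles `X` such that the function `c(X)` is total. -/
def TOT (c : CodeO) : Set Cantor := {X | ∀ n, (evalO X c n).Dom}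

/-- The domain of the partial function `c(X)`. -/
def domSet (c : CodeO) (X : Cantor) : Set ℕ := {n | (evalO X c n).Dom}

/-- The range of the partial function `c(X)`. -/
def ranSet (c : CodeO) (X : Cantor) : Set ℕ := {v | ∃ n, v ∈ evalO X c n}

/-- `INF(c)`: the oracles `X` such that `c(X)` has infinite domain. -/
def INF (c : CodeO) : Set Cantor := {X | (domSet c X).Infinite}

/-- `COF(c)`: the oracles `X` such that `c(X)` has cofinite domain. -/
def COF (c : CodeO) : Set Cantor := {X | (domSet c X)ᶜ.Finite}

/-- `COM(c)`: the oracles `X` such that `c(X)` has computable domain. -/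
def COM (c : CodeO) : Set Cantor := {X | ComputablePred fun n => n ∈ domSet c X}

/-- The characteristic function of a set of naturals. -/
noncomputable def chi (A : Set ℕ) : ℕ → ℕ := fun n => if n ∈ A then 1 else 0

/-- Turing reducibility between sets of naturals. -/
def TuringLEs (B A : Set ℕ) : Prop := ∃ c : CodeO, ∀ n, c.eval (chi A) n = Part.some (chi B n)

/-- The halting problem `∅'` as a set of naturals. -/
noncomputable def HaltingSet : Set ℕ := {e | iterJump 1 e = 1}

/-- `COMPL(c)`: the oracles `X` such that the domain of `c(X)` computes the halting problem. -/
noncomputable def COMPL (c : CodeO) : Set Cantor := {X | TuringLEs HaltingSet (domSet c X)}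

/-- Turing reducibility between total functions on ℕ. -/
def TuringLEf (f g : ℕ → ℕ) : Prop := ∃ c : CodeO, ∀ n, c.eval g n = Part.some (f n)

/-- A real number viewed as an oracle, via its binary expansion. -/
noncomputable def realOracle (α : ℝ) : ℕ → ℕ := oX (digits α)

/-- Two reals have Turing-incomparable degrees. -/
noncomputable def TIncompReal (α β : ℝ) : Prop :=
  ¬ TuringLEf (realOracle α) (realOracle β) ∧ ¬ TuringLEf (realOracle β) (realOracle α)

/-! ### Arithmetical hierarchy -/

/-- Evaluation with the trivial (empty) oracle: ordinary partial recursion. -/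
def eval0 (c : CodeO) : ℕ →. ℕ := c.eval fun _ => 0

/-- `SigmaNumIdx n c` is the `Σ^0_{n+1}` subset of `ℕ` with index `c`. -/
def SigmaNumIdx : ℕ → CodeO → Set ℕ
  | 0, c => {m | (eval0 c m).Dom}
  | n + 1, c => {m | ∃ k, Nat.pair m k ∉ SigmaNumIdx n c}

/-- `S ⊆ ℕ` is `Σ^0_n` (intended for `n ≥ 1`). -/
def SigmaN (n : ℕ) (S : Set ℕ) : Prop := ∃ c : CodeO, S = SigmaNumIdx (n - 1) c

/-- The set of codes of the elements of a set of binary strings. -/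
def strCodes (S : Set (List Bool)) : Set ℕ := {m | ∃ σ ∈ S, Encodable.encode σ = m}

/-- A set of binary strings is `Σ^0_n`. -/
def SigmaStr (n : ℕ) (S : Set (List Bool)) : Prop := SigmaN n (strCodes S)

/-- A set of binary strings is `Π^0_n`: its complement is `Σ^0_n`. -/
def PiStr (n : ℕ) (S : Set (List Bool)) : Prop := SigmaStr n Sᶜ

/-- A set of binary strings is c.e. relative to the oracle `O`. -/
def CeStrIn (O : ℕ → ℕ) (S : Set (List Bool)) : Prop := CeIn O (strCodes S)

/-- `SigmaClassIdx n c m` is the `Σ^0_{n+1}` class of elements of Cantor space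
with index `c` and parameter `m`. -/
def SigmaClassIdx : ℕ → CodeO → ℕ → Set Cantor
  | 0, c, m => {X | (evalO X c m).Dom}
  | n + 1, c, m => {X | ∃ k, X ∉ SigmaClassIdx n c (Nat.pair m k)}

/-! ### Monotone machines -/

/-- A monotone machine: a partial computable, monotone map on finite binary strings. -/
structure MonoMachine where
  f : List Bool →. List Bool
  partrec : Partrec f
  mono : ∀ ⦃σ τ a b : List Bool⦄, σ <+: τ → a ∈ f σ → b ∈ f τ → a <+: b

/-- The oracles `X` such that the output of the monotone machine on `X` is infinite. -/
def MonoINF (M : MonoMachine) : Set Cantor :=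
  {X | ∀ k, ∃ n a, a ∈ M.f (initSeg X n) ∧ k ≤ a.length}

/-- The `k`-th bit of the output `M(X)` of a monotone machine is `b`. -/
def MonoMachine.hasBit (M : MonoMachine) (X : Cantor) (k : ℕ) (b : Bool) : Prop :=
  ∃ n a, a ∈ M.f (initSeg X n) ∧ a[k]? = some b

/-- `U` is a universal monotone machine. -/
def UniversalMono (U : MonoMachine) : Prop :=
  ∃ (M : ℕ → MonoMachine) (σ : ℕ → List Bool),
    Partrec₂ (fun (e : ℕ) (τ : List Bool) => (M e).f τ) ∧
    (∀ V : MonoMachine, ∃ e, (M e).f = V.f) ∧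
    Computable σ ∧ IsPrefixFree (Set.range σ) ∧
    ∀ e τ, U.f (σ e ++ τ) = (M e).f τ

/-! ### Infinitary self-delimiting machines -/

/-- Chaitin's infinitary self-delimiting machines: `f σ n` is the `n`-th approximation
of the output on program `σ` (`none` meaning divergence); the convergence relation is
decidable, approximations are monotone, and machines are self-delimiting. -/
structure InfMachine where
  f : List Bool → ℕ → Option (List Bool)
  computable : Computable₂ f
  mono : ∀ σ m n a, n < m → f σ m = some a → ∃ b, f σ n = some b ∧ b <+: a
  sd : ∀ σ τ n a, f σ n = some a → f (σ ++ τ) n = some a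

/-- `M^∞(σ)↓`: all approximations converge. -/
def InfMachine.domInf (M : InfMachine) (σ : List Bool) : Prop := ∀ n, M.f σ n ≠ none

/-- The domain of `M^∞`. -/
def InfMachine.DOM (M : InfMachine) : Set (List Bool) := {σ | M.domInf σ}

/-- The output `M^∞(σ)` is infinite (a stream). -/
def InfMachine.outInf (M : InfMachine) (σ : List Bool) : Prop :=
  ∀ k, ∃ n a, M.f σ n = some a ∧ k ≤ a.length

/-- `FIN(M^∞)`: programs in the domain with finite output. -/
def InfMachine.FIN (M : InfMachine) : Set (List Bool) := {σ | M.domInf σ ∧ ¬ M.outInf σ}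

/-- `INF(M^∞)`: programs in the domain with infinite output. -/
def InfMachine.INF (M : InfMachine) : Set (List Bool) := {σ | M.domInf σ ∧ M.outInf σ}

/-- The `k`-th bit of the output `M^∞(σ)` is `b`. -/
def InfMachine.hasBit (M : InfMachine) (σ : List Bool) (k : ℕ) (b : Bool) : Prop :=
  ∃ n a, M.f σ n = some a ∧ a[k]? = some b

/-- The domain of the prefix-free machine `M^*`: minimal strings in the domain of `M^∞`. -/
def InfMachine.DOMstar (M : InfMachine) : Set (List Bool) :=
  {σ | M.domInf σ ∧ ∀ τ, τ <+: σ → τ ≠ σ → ¬ M.domInf τ}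

/-- Programs whose output is a stream with a tail of 1s. -/
def InfMachine.COFout (M : InfMachine) : Set (List Bool) :=
  {σ | M.domInf σ ∧ M.outInf σ ∧ ∃ t, ∀ k, t ≤ k → M.hasBit σ k true}

/-- `A^∞(σ) ≃ B^∞(τ)`: both converge or both diverge, with equal outputs. -/
def InfAgree (A : InfMachine) (σ : List Bool) (B : InfMachine) (τ : List Bool) : Prop :=
  (A.domInf σ ↔ B.domInf τ) ∧ (A.domInf σ → ∀ k b, (A.hasBit σ k b ↔ B.hasBit τ k b))

/-- `U` is a universal infinitary self-delimiting machine. -/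
def UniversalInf (U : InfMachine) : Prop :=
  ∃ (M : ℕ → InfMachine) (σ : ℕ → List Bool),
    Computable (fun p : ℕ × List Bool × ℕ => (M p.1).f p.2.1 p.2.2) ∧
    (∀ V : InfMachine, ∃ e, ∀ τ, InfAgree (M e) τ V τ) ∧
    Computable σ ∧ IsPrefixFree (Set.range σ) ∧
    ∀ e τ, InfAgree U (σ e ++ τ) (M e) τ

end RandProb

namespace RandProb


open Nat.Partrec (Code)
open Nat.Partrec.Code (evaln)

theorem code_to_codeO (c : Code) : ∃ c' : CodeO, ∀ O, c'.eval O = c.eval := by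
  induction c with
  | zero => exact ⟨.zero, fun O => rfl⟩
  | succ => exact ⟨.succ, fun O => rfl⟩
  | left => exact ⟨.left, fun O => rfl⟩
  | right => exact ⟨.right, fun O => rfl⟩
  | pair f g hf hg =>
    obtain ⟨f', hf⟩ := hf
    obtain ⟨g', hg⟩ := hg
    exact ⟨.pair f' g', fun O => by simp only [CodeO.eval, Nat.Partrec.Code.eval, hf, hg]; rfl⟩
  | comp f g hf hg =>
    obtain ⟨f', hf⟩ := hf
    obtain ⟨g', hg⟩ := hg
    exact ⟨.comp f' g', fun O => by simp only [CodeO.eval, Nat.Partrec.Code.eval, hf, hg]; rfl⟩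
  | prec f g hf hg =>
    obtain ⟨f', hf⟩ := hf
    obtain ⟨g', hg⟩ := hg
    exact ⟨.prec f' g', fun O => by simp only [CodeO.eval, Nat.Partrec.Code.eval, hf, hg]; rfl⟩
  | rfind' f hf =>
    obtain ⟨f', hf⟩ := hf
    exact ⟨.rfind' f', fun O => by simp only [CodeO.eval, Nat.Partrec.Code.eval, hf]; rfl⟩

theorem exists_codeO {f : ℕ →. ℕ} (hf : Nat.Partrec f) : ∃ c : CodeO, ∀ O, c.eval O = f := by
  obtain ⟨c, rfl⟩ := Nat.Partrec.Code.exists_code.1 hf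
  exact code_to_codeO c

/-- Lookup in a coded list. -/
theorem lookup_partrec : Partrec fun n : ℕ =>
    ((((Encodable.decode (α := List ℕ) n.unpair.1).getD [])[n.unpair.2]? : Option ℕ) : Part ℕ) := by
  apply Computable.ofOption
  apply Primrec.to_comp
  have h1 : Primrec fun n : ℕ => n.unpair.1 := Primrec.fst.comp Primrec.unpair
  have h2 : Primrec fun n : ℕ => n.unpair.2 := Primrec.snd.comp Primrec.unpair
  refine Primrec.list_getElem?.comp ?_ h2
  exact Primrec.option_getD.comp (Primrec.decode.comp h1) (Primrec.const [])

theorem lookupCode_exists : ∃ L : Code, ∀ (τ : List ℕ) (x : ℕ),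
    (L.curry (Encodable.encode τ)).eval x = ((τ[x]? : Option ℕ) : Part ℕ) := by
  obtain ⟨L, hL⟩ := Nat.Partrec.Code.exists_code.1 (Partrec.nat_iff.1 lookup_partrec)
  refine ⟨L, fun τ x => ?_⟩
  rw [Nat.Partrec.Code.eval_curry, hL]
  simp

noncomputable def lookupCode : Code := lookupCode_exists.choose

theorem eval_lookup (τ : List ℕ) (x : ℕ) :
    (lookupCode.curry (Encodable.encode τ)).eval x = ((τ[x]? : Option ℕ) : Part ℕ) :=
  lookupCode_exists.choose_spec τ x

/-- Replace the oracle by a lookup in a finite list. -/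
noncomputable def trans (τ : List ℕ) : CodeO → Code
  | .zero => .zero
  | .succ => .succ
  | .left => .left
  | .right => .right
  | .oracle => lookupCode.curry (Encodable.encode τ)
  | .pair f g => .pair (trans τ f) (trans τ g)
  | .comp f g => .comp (trans τ f) (trans τ g)
  | .prec f g => .prec (trans τ f) (trans τ g)
  | .rfind' f => .rfind' (trans τ f)

def decodeO : ℕ → CodeO
  | 0 => .zero
  | 1 => .succ
  | 2 => .left
  | 3 => .right
  | 4 => .oracle
  | n + 5 =>
    have h : n / 4 < n + 5 := by omega
    have h1 : (n / 4).unpair.1 < n + 5 := lt_of_le_of_lt (Nat.unpair_left_le _) h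
    have h2 : (n / 4).unpair.2 < n + 5 := lt_of_le_of_lt (Nat.unpair_right_le _) h
    if n % 4 = 0 then .pair (decodeO (n / 4).unpair.1) (decodeO (n / 4).unpair.2)
    else if n % 4 = 1 then .prec (decodeO (n / 4).unpair.1) (decodeO (n / 4).unpair.2)
    else if n % 4 = 2 then .comp (decodeO (n / 4).unpair.1) (decodeO (n / 4).unpair.2)
    else .rfind' (decodeO (n / 4))

theorem decodeO_encode (c : CodeO) : decodeO c.encode = c := by
  induction c with
  | zero => simp [CodeO.encode, decodeO]
  | succ => simp [CodeO.encode, decodeO]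
  | left => simp [CodeO.encode, decodeO]
  | right => simp [CodeO.encode, decodeO]
  | oracle => simp [CodeO.encode, decodeO]
  | pair f g hf hg =>
    rw [CodeO.encode, decodeO]
    have h1 : (2 * (2 * Nat.pair f.encode g.encode)) % 4 = 0 := by omega
    have h2 : (2 * (2 * Nat.pair f.encode g.encode)) / 4 = Nat.pair f.encode g.encode := by omega
    simp [h1, h2, hf, hg]
  | comp f g hf hg =>
    rw [CodeO.encode, decodeO]
    have h1 : (2 * (2 * Nat.pair f.encode g.encode + 1)) % 4 = 2 := by omega
    have h2 : (2 * (2 * Nat.pair f.encode g.encode + 1)) / 4 = Nat.pair f.encode g.encode := by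
      omega
    simp [h1, h2, hf, hg]
  | prec f g hf hg =>
    rw [CodeO.encode, show ∀ x, 2 * (2 * x) + 6 = (4 * x + 1) + 5 by intro x; ring, decodeO]
    have h1 : (4 * Nat.pair f.encode g.encode + 1) % 4 = 1 := by omega
    have h2 : (4 * Nat.pair f.encode g.encode + 1) / 4 = Nat.pair f.encode g.encode := by omega
    simp [h1, h2, hf, hg]
  | rfind' f hf =>
    rw [CodeO.encode, show ∀ x, 2 * (2 * x + 1) + 6 = (4 * x + 3) + 5 by intro x; ring, decodeO]
    have h1 : (4 * f.encode + 3) % 4 = 3 := by omega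
    have h2 : (4 * f.encode + 3) / 4 = f.encode := by omega
    simp [h1, h2, hf]

noncomputable def transN (τ : List ℕ) (e : ℕ) : Code := trans τ (decodeO e)

/-- The strong-recursion step for `transN`. -/
noncomputable def transStep (τ : List ℕ) (l : List Code) : Code :=
  let n := l.length
  let p := (n - 5) / 4
  if n = 0 then .zero else if n = 1 then .succ else if n = 2 then .left else
  if n = 3 then .right else if n = 4 then lookupCode.curry (Encodable.encode τ) else
  if (n - 5) % 4 = 0 then .pair (l.getD p.unpair.1 .zero) (l.getD p.unpair.2 .zero) else
  if (n - 5) % 4 = 1 then .prec (l.getD p.unpair.1 .zero) (l.getD p.unpair.2 .zero) else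
  if (n - 5) % 4 = 2 then .comp (l.getD p.unpair.1 .zero) (l.getD p.unpair.2 .zero) else
  .rfind' (l.getD p .zero)

theorem primrec_transStep : Primrec₂ transStep := by
  unfold transStep
  have hn : Primrec fun a : List ℕ × List Code => a.2.length :=
    Primrec.list_length.comp Primrec.snd
  have hm : Primrec fun a : List ℕ × List Code => a.2.length - 5 :=
    Primrec.nat_sub.comp hn (Primrec.const 5)
  have hp : Primrec fun a : List ℕ × List Code => (a.2.length - 5) / 4 :=
    Primrec.nat_div.comp hm (Primrec.const 4)
  have hr : Primrec fun a : List ℕ × List Code => (a.2.length - 5) % 4 :=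
    Primrec.nat_mod.comp hm (Primrec.const 4)
  have g1 : Primrec fun a : List ℕ × List Code =>
      a.2.getD ((a.2.length - 5) / 4).unpair.1 .zero :=
    (Primrec.list_getD Code.zero).comp Primrec.snd (Primrec.fst.comp (Primrec.unpair.comp hp))
  have g2 : Primrec fun a : List ℕ × List Code =>
      a.2.getD ((a.2.length - 5) / 4).unpair.2 .zero :=
    (Primrec.list_getD Code.zero).comp Primrec.snd (Primrec.snd.comp (Primrec.unpair.comp hp))
  have g3 : Primrec fun a : List ℕ × List Code => a.2.getD ((a.2.length - 5) / 4) .zero :=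
    (Primrec.list_getD Code.zero).comp Primrec.snd hp
  have eqc : ∀ {f : List ℕ × List Code → ℕ} (_ : Primrec f) (k : ℕ),
      PrimrecPred fun a => f a = k := fun hf k => Primrec.eq.comp hf (Primrec.const k)
  refine Primrec.ite (eqc hn 0) (Primrec.const _) ?_
  refine Primrec.ite (eqc hn 1) (Primrec.const _) ?_
  refine Primrec.ite (eqc hn 2) (Primrec.const _) ?_
  refine Primrec.ite (eqc hn 3) (Primrec.const _) ?_
  refine Primrec.ite (eqc hn 4) (Nat.Partrec.Code.primrec₂_curry.comp (Primrec.const _)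
    (Primrec.encode.comp Primrec.fst)) ?_
  refine Primrec.ite (eqc hr 0) (Nat.Partrec.Code.primrec₂_pair.comp g1 g2) ?_
  refine Primrec.ite (eqc hr 1) (Nat.Partrec.Code.primrec₂_prec.comp g1 g2) ?_
  refine Primrec.ite (eqc hr 2) (Nat.Partrec.Code.primrec₂_comp.comp g1 g2) ?_
  exact Nat.Partrec.Code.primrec_rfind'.comp g3

theorem primrec_transN : Primrec₂ transN := by
  refine Primrec.nat_strong_rec transN (g := fun τ l => some (transStep τ l))
    (Primrec.option_some.comp primrec_transStep) ?_
  intro τ n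
  congr 1
  have hget : ∀ k < n, ((List.range n).map (transN τ)).getD k .zero = transN τ k := by
    intro k hk
    simp [List.getD_eq_getElem?_getD, hk]
  simp only [transStep, List.length_map, List.length_range]
  rcases n with _ | _ | _ | _ | _ | n
  · simp [transN, decodeO, trans]
  · simp [transN, decodeO, trans]
  · simp [transN, decodeO, trans]
  · simp [transN, decodeO, trans]
  · simp [transN, decodeO, trans]
  have h : n / 4 < n + 5 := by omega
  have h1 : (n / 4).unpair.1 < n + 5 := lt_of_le_of_lt (Nat.unpair_left_le _) h
  have h2 : (n / 4).unpair.2 < n + 5 := lt_of_le_of_lt (Nat.unpair_right_le _) h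
  simp only [show n + 1 + 1 + 1 + 1 + 1 = n + 5 from rfl, Nat.add_sub_cancel]
  rw [hget _ h, hget _ h1, hget _ h2]
  have e : transN τ (n + 5) = trans τ (decodeO (n + 5)) := rfl
  rw [e, decodeO]
  simp only [Nat.add_eq_zero_iff, OfNat.ofNat_ne_zero, and_false, if_false,
    show n + 5 ≠ 1 by omega, show n + 5 ≠ 2 by omega, show n + 5 ≠ 3 by omega,
    show n + 5 ≠ 4 by omega]
  split_ifs <;> rfl

/-- The first `n` values of an oracle. -/
def seg (O : ℕ → ℕ) (n : ℕ) : List ℕ := (List.range n).map O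

theorem seg_get (O : ℕ → ℕ) (n i : ℕ) : (seg O n)[i]? = if i < n then some (O i) else none := by
  unfold seg
  split_ifs with h
  · simp [h]
  · simp [h]

theorem trans_sound (O : ℕ → ℕ) (m : ℕ) (c : CodeO) : ∀ x y,
    y ∈ (trans (seg O m) c).eval x → y ∈ c.eval O x := by
  induction c with
  | zero => exact fun x y h => h
  | succ => exact fun x y h => h
  | left => exact fun x y h => h
  | right => exact fun x y h => h
  | oracle =>
    intro x y h
    rw [trans, eval_lookup, seg_get] at h
    simp only [CodeO.eval]
    split_ifs at h
    · simpa using h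
    · simp at h
  | pair f g hf hg =>
    intro x y h
    simp only [trans, Nat.Partrec.Code.eval, CodeO.eval, Seq.seq] at h ⊢
    simp only [Part.map_eq_map, Part.mem_bind_iff, Part.mem_map_iff] at h ⊢
    obtain ⟨_, ⟨a, ha, rfl⟩, b, hb, rfl⟩ := h
    exact ⟨_, ⟨a, hf _ _ ha, rfl⟩, b, hg _ _ hb, rfl⟩
  | comp f g hf hg =>
    intro x y h
    obtain ⟨a, ha, hb⟩ := Part.mem_bind_iff.1 h
    exact Part.mem_bind_iff.2 ⟨a, hg _ _ ha, hf _ _ hb⟩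
  | prec f g hf hg =>
    intro x y h
    simp only [trans, Nat.Partrec.Code.eval, CodeO.eval, Nat.unpaired] at h ⊢
    revert y
    induction x.unpair.2 with
    | zero => exact fun y h => hf _ _ h
    | succ k ih =>
      intro y h
      simp only [Part.bind_eq_bind, Part.mem_bind_iff] at h ⊢
      obtain ⟨a, ha, hb⟩ := h
      exact ⟨a, ih _ ha, hg _ _ hb⟩
  | rfind' f hf =>
    intro x y h
    simp only [trans, Nat.Partrec.Code.eval, CodeO.eval, Nat.unpaired] at h ⊢
    obtain ⟨a, ha, rfl⟩ := (Part.mem_map_iff _).1 h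
    obtain ⟨h1, hc⟩ := Nat.mem_rfind.1 ha
    obtain ⟨b, hb, hb'⟩ := (Part.mem_map_iff _).1 h1
    refine (Part.mem_map_iff _).2 ⟨a, Nat.mem_rfind.2
      ⟨(Part.mem_map_iff _).2 ⟨b, hf _ _ hb, by simpa using hb'⟩, ?_⟩, rfl⟩
    intro k hk
    obtain ⟨b, hb, hb'⟩ := (Part.mem_map_iff _).1 (hc hk)
    exact (Part.mem_map_iff _).2 ⟨b, hf _ _ hb, by simpa using hb'⟩

theorem trans_complete (O : ℕ → ℕ) (c : CodeO) : ∀ x y,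
    y ∈ c.eval O x → ∀ᶠ m in Filter.atTop, y ∈ (trans (seg O m) c).eval x := by
  induction c with
  | zero => exact fun x y h => Filter.Eventually.of_forall fun _ => h
  | succ => exact fun x y h => Filter.Eventually.of_forall fun _ => h
  | left => exact fun x y h => Filter.Eventually.of_forall fun _ => h
  | right => exact fun x y h => Filter.Eventually.of_forall fun _ => h
  | oracle =>
    intro x y h
    filter_upwards [Filter.eventually_gt_atTop x] with m hm
    rw [trans, eval_lookup, seg_get, if_pos hm]
    simpa [CodeO.eval] using h
  | pair f g hf hg =>
    intro x y h
    simp only [trans, Nat.Partrec.Code.eval, CodeO.eval, Seq.seq] at h ⊢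
    simp only [Part.map_eq_map, Part.mem_bind_iff, Part.mem_map_iff] at h ⊢
    obtain ⟨_, ⟨a, ha, rfl⟩, b, hb, rfl⟩ := h
    filter_upwards [hf _ _ ha, hg _ _ hb] with m h1 h2
    exact ⟨_, ⟨a, h1, rfl⟩, b, h2, rfl⟩
  | comp f g hf hg =>
    intro x y h
    obtain ⟨a, ha, hb⟩ := Part.mem_bind_iff.1 h
    filter_upwards [hg _ _ ha, hf _ _ hb] with m h1 h2
    exact Part.mem_bind_iff.2 ⟨a, h1, h2⟩
  | prec f g hf hg =>
    intro x y h
    simp only [trans, Nat.Partrec.Code.eval, CodeO.eval, Nat.unpaired] at h ⊢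
    revert y
    induction x.unpair.2 with
    | zero => exact fun y h => hf _ _ h
    | succ k ih =>
      intro y h
      simp only [Part.bind_eq_bind, Part.mem_bind_iff] at h ⊢
      obtain ⟨a, ha, hb⟩ := h
      filter_upwards [ih _ ha, hg _ _ hb] with m h1 h2
      exact ⟨a, h1, h2⟩
  | rfind' f hf =>
    intro x y h
    simp only [trans, Nat.Partrec.Code.eval, CodeO.eval, Nat.unpaired] at h ⊢
    obtain ⟨a, ha, rfl⟩ := (Part.mem_map_iff _).1 h
    obtain ⟨h1, hc⟩ := Nat.mem_rfind.1 ha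
    obtain ⟨b, hb, hb'⟩ := (Part.mem_map_iff _).1 h1
    have key : ∀ᶠ m in Filter.atTop, ∀ k ∈ Finset.range a, ∃ b,
        b ∈ (trans (seg O m) f).eval (Nat.pair x.unpair.1 (k + x.unpair.2)) ∧
          decide (b = 0) = false := by
      rw [Filter.eventually_all_finset]
      intro k hk
      obtain ⟨b, hb, hb'⟩ := (Part.mem_map_iff _).1 (hc (Finset.mem_range.1 hk))
      filter_upwards [hf _ _ hb] with m h1
      exact ⟨b, h1, by simpa using hb'⟩
    filter_upwards [key, hf _ _ hb] with m h1 h2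
    refine (Part.mem_map_iff _).2 ⟨a, Nat.mem_rfind.2
      ⟨(Part.mem_map_iff _).2 ⟨b, h2, by simpa using hb'⟩, ?_⟩, rfl⟩
    intro k hk
    exact (Part.mem_map_iff _).2 (h1 k (Finset.mem_range.2 hk))

/-- Bounded halting with a finite oracle. -/
def Hs (τ : List ℕ) (e x : ℕ) : Prop :=
  ∃ j < τ.length + 1, (evaln τ.length (transN (seg (fun i => τ.getD i 0) j) e) x).isSome = true

theorem Hs_seg (O : ℕ → ℕ) (s e x : ℕ) : Hs (seg O s) e x ↔
    ∃ j ≤ s, (evaln s (transN (seg O j) e) x).isSome = true := by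
  unfold Hs
  have hl : (seg O s).length = s := by simp [seg]
  rw [hl]
  apply exists_congr
  intro j
  rw [Nat.lt_succ_iff]
  apply and_congr_right
  intro hj
  have : seg (fun i => (seg O s).getD i 0) j = seg O j := by
    apply List.map_congr_left
    intro i hi
    have : i < s := lt_of_lt_of_le (List.mem_range.1 hi) hj
    simp [List.getD_eq_getElem?_getD, seg_get, this]
  rw [this]

theorem evaln_isSome_mono {k k' : ℕ} (h : k ≤ k') {c : Code} {x : ℕ}
    (hs : (evaln k c x).isSome = true) : (evaln k' c x).isSome = true := by
  obtain ⟨y, hy⟩ := Option.isSome_iff_exists.1 hs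
  exact Option.isSome_iff_exists.2 ⟨y, Nat.Partrec.Code.evaln_mono h hy⟩

theorem Hs_mono (O : ℕ → ℕ) {s s' : ℕ} (h : s ≤ s') (e x : ℕ) (hs : Hs (seg O s) e x) :
    Hs (seg O s') e x := by
  rw [Hs_seg] at hs ⊢
  obtain ⟨j, hj, hs⟩ := hs
  exact ⟨j, hj.trans h, evaln_isSome_mono h hs⟩

theorem dom_iff_Hs (O : ℕ → ℕ) (c : CodeO) (x : ℕ) :
    (c.eval O x).Dom ↔ ∃ s, Hs (seg O s) c.encode x := by
  simp only [Hs_seg, transN, decodeO_encode]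
  constructor
  · intro h
    obtain ⟨y, hy⟩ := Part.dom_iff_mem.1 h
    obtain ⟨m, hm⟩ := (trans_complete O c x y hy).exists
    obtain ⟨k, hk⟩ := Nat.Partrec.Code.evaln_complete.1 hm
    exact ⟨max m k, m, le_max_left _ _, evaln_isSome_mono (le_max_right m k)
      (Option.isSome_iff_exists.2 ⟨y, hk⟩)⟩
  · rintro ⟨s, j, -, h⟩
    obtain ⟨y, hy⟩ := Option.isSome_iff_exists.1 h
    exact Part.dom_iff_mem.2 ⟨y, trans_sound O j c x y (Nat.Partrec.Code.evaln_sound hy)⟩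

/-- Approximation to the jump. -/
noncomputable def FF (τ : List ℕ) (n : ℕ) : List ℕ :=
  (List.range n).map fun i => if Hs τ i i then 1 else 0

theorem encodeO_surj (e : ℕ) : ∃ c : CodeO, c.encode = e := by
  induction e using Nat.strong_induction_on with
  | _ e ih =>
    rcases e with _ | _ | _ | _ | _ | n
    · exact ⟨.zero, rfl⟩
    · exact ⟨.succ, rfl⟩
    · exact ⟨.left, rfl⟩
    · exact ⟨.right, rfl⟩
    · exact ⟨.oracle, rfl⟩
    have h : n / 4 < n + 5 := by omega
    have h1 : (n / 4).unpair.1 < n + 5 := lt_of_le_of_lt (Nat.unpair_left_le _) h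
    have h2 : (n / 4).unpair.2 < n + 5 := lt_of_le_of_lt (Nat.unpair_right_le _) h
    obtain ⟨c, hc⟩ := ih _ h
    obtain ⟨c1, hc1⟩ := ih _ h1
    obtain ⟨c2, hc2⟩ := ih _ h2
    have h4 : n % 4 < 4 := Nat.mod_lt _ (by norm_num)
    have hd := Nat.div_add_mod n 4
    interval_cases hr : n % 4
    · refine ⟨.pair c1 c2, ?_⟩
      simp only [CodeO.encode, hc1, hc2, Nat.pair_unpair]; omega
    · refine ⟨.prec c1 c2, ?_⟩
      simp only [CodeO.encode, hc1, hc2, Nat.pair_unpair]; omega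
    · refine ⟨.comp c1 c2, ?_⟩
      simp only [CodeO.encode, hc1, hc2, Nat.pair_unpair]; omega
    · refine ⟨.rfind' c, ?_⟩
      simp only [CodeO.encode, hc]; omega

theorem jump_eq (O : ℕ → ℕ) (e : ℕ) : jump O e = if ∃ s, Hs (seg O s) e e then 1 else 0 := by
  unfold jump
  congr 1
  apply propext
  constructor
  · rintro ⟨c, rfl, h⟩
    exact (dom_iff_Hs O c _).1 h
  · intro h
    obtain ⟨c, rfl⟩ := encodeO_surj e
    exact ⟨c, rfl, (dom_iff_Hs O c _).2 h⟩

theorem FF_eventually (O : ℕ → ℕ) (n : ℕ) :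
    ∀ᶠ s in Filter.atTop, FF (seg O s) n = seg (jump O) n := by
  have key : ∀ᶠ s in Filter.atTop, ∀ i ∈ Finset.range n,
      (if Hs (seg O s) i i then 1 else 0) = jump O i := by
    rw [Filter.eventually_all_finset]
    intro i _
    by_cases h : ∃ s, Hs (seg O s) i i
    · obtain ⟨t, ht⟩ := h
      filter_upwards [Filter.eventually_ge_atTop t] with s hs
      rw [jump_eq, if_pos (Hs_mono O hs _ _ ht), if_pos ⟨t, ht⟩]
    · refine Filter.Eventually.of_forall fun s => ?_
      rw [jump_eq, if_neg h, if_neg fun h' => h ⟨s, h'⟩]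
  filter_upwards [key] with s hs
  apply List.map_congr_left
  intro i hi
  exact hs i (Finset.mem_range.2 (List.mem_range.1 hi))

theorem sigma3 {S : Set ℕ} (hS : CeIn (iterJump 2) S) : ∃ e : ℕ, ∀ m, m ∈ S ↔
    ∃ n t, ∀ s u, ∃ v, u ≤ v ∧ Hs (FF (FF (seg (fun _ => 0) v) (t + s)) n) e m := by
  obtain ⟨c, rfl⟩ := hS
  refine ⟨c.encode, fun m => ?_⟩
  rw [Set.mem_ofPred_eq, dom_iff_Hs]
  apply exists_congr
  intro n
  have hB := FF_eventually (iterJump 1) n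
  have inner : ∀ s, (∀ u, ∃ v, u ≤ v ∧ Hs (FF (FF (seg (fun _ => 0) v) s) n) c.encode m) ↔
      Hs (FF (seg (iterJump 1) s) n) c.encode m := by
    intro s
    have hA := FF_eventually (iterJump 0) s
    constructor
    · intro h
      obtain ⟨u, hu⟩ := Filter.eventually_atTop.1 hA
      obtain ⟨v, hv, hh⟩ := h u
      have := hu v hv
      simp only [iterJump] at this ⊢
      rwa [this] at hh
    · intro h u
      obtain ⟨v, hv, hu⟩ := (hA.and (Filter.eventually_ge_atTop u)).exists
      refine ⟨v, hu, ?_⟩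
      simp only [iterJump] at hv h ⊢
      rwa [hv]
  simp only [inner]
  constructor
  · intro h
    obtain ⟨t, ht⟩ := Filter.eventually_atTop.1 hB
    refine ⟨t, fun s => ?_⟩
    rw [ht _ (Nat.le_add_right t s)]
    exact h
  · rintro ⟨t, h⟩
    obtain ⟨s, hs, hst⟩ := (hB.and (Filter.eventually_ge_atTop t)).exists
    have := h (s - t)
    rw [Nat.add_sub_cancel' hst, hs] at this
    exact this

section primrec_lemmas
variable {α : Type*} [Primcodable α]

theorem primrecPred_exists_lt {R : α → ℕ → Prop} {f : α → ℕ} (hR : PrimrecRel R)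
    (hf : Primrec f) : PrimrecPred fun a => ∃ x < f a, R a x := by
  have h1 : PrimrecRel fun (x : ℕ) (a : α) => R a x := hR.comp Primrec.snd Primrec.fst
  have h2 : PrimrecPred fun a => ∃ x ∈ List.range (f a), R a x :=
    h1.exists_mem_list.comp (Primrec.list_range.comp hf) Primrec.id
  exact h2.of_eq fun a => by simp

theorem primrecPred_forall_lt {R : α → ℕ → Prop} {f : α → ℕ} (hR : PrimrecRel R)
    (hf : Primrec f) : PrimrecPred fun a => ∀ x < f a, R a x := by
  have h1 : PrimrecRel fun (x : ℕ) (a : α) => R a x := hR.comp Primrec.snd Primrec.fst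
  have h2 : PrimrecPred fun a => ∀ x ∈ List.range (f a), R a x :=
    h1.forall_mem_list.comp (Primrec.list_range.comp hf) Primrec.id
  exact h2.of_eq fun a => by simp

theorem primrecPred_isSome {β : Type*} [Primcodable β] {f : α → Option β} (hf : Primrec f) :
    PrimrecPred fun a => (f a).isSome = true :=
  Primrec.eq.comp (Primrec.option_isSome.comp hf) (Primrec.const true)

theorem primrec_unpair1 {f : α → ℕ} (hf : Primrec f) : Primrec fun a => (f a).unpair.1 :=
  Primrec.fst.comp (Primrec.unpair.comp hf)

theorem primrec_unpair2 {f : α → ℕ} (hf : Primrec f) : Primrec fun a => (f a).unpair.2 :=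
  Primrec.snd.comp (Primrec.unpair.comp hf)

theorem primrec_two_pow {f : α → ℕ} (hf : Primrec f) : Primrec fun a => 2 ^ (f a) := by
  have : Primrec fun n : ℕ => 2 ^ n := by
    refine (Primrec.nat_rec₁ 1 (f := fun _ y => 2 * y)
      (Primrec.nat_mul.comp (Primrec.const 2) Primrec.snd)).of_eq fun n => ?_
    induction n with
    | zero => rfl
    | succ n ih => simp only [pow_succ, mul_comm _ 2, ← ih]
  exact this.comp hf

theorem primrec_Hs {f : α → List ℕ} {g h : α → ℕ} (hf : Primrec f) (hg : Primrec g)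
    (hh : Primrec h) : PrimrecPred fun a => Hs (f a) (g a) (h a) := by
  unfold Hs
  refine primrecPred_exists_lt (R := fun a j => (evaln (f a).length
    (transN (seg (fun i => (f a).getD i 0) j) (g a)) (h a)).isSome = true) ?_
    (Primrec.succ.comp (Primrec.list_length.comp hf))
  refine primrecPred_isSome ?_
  have hseg : Primrec fun p : α × ℕ => seg (fun i => (f p.1).getD i 0) p.2 := by
    unfold seg
    refine Primrec.list_map (Primrec.list_range.comp Primrec.snd) ?_
    exact (Primrec.list_getD 0).comp (hf.comp (Primrec.fst.comp Primrec.fst)) Primrec.snd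
  exact Nat.Partrec.Code.primrec_evaln.comp (Primrec.pair (Primrec.pair
    (Primrec.list_length.comp (hf.comp Primrec.fst))
    (primrec_transN.comp hseg (hg.comp Primrec.fst))) (hh.comp Primrec.fst))

theorem primrec_FF {f : α → List ℕ} {g : α → ℕ} (hf : Primrec f) (hg : Primrec g) :
    Primrec fun a => FF (f a) (g a) := by
  unfold FF
  refine Primrec.list_map (Primrec.list_range.comp hg) ?_
  exact Primrec.ite (primrec_Hs (hf.comp Primrec.fst) Primrec.snd Primrec.snd)
    (Primrec.const 1) (Primrec.const 0)

/-- The matrix of the `Σ₃` predicate; `j = ⟨t, m, n, t'⟩`, `x = ⟨s, u⟩`. -/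
def DD (e j x y : ℕ) : Prop :=
  x.unpair.2 ≤ y ∧
    Hs (FF (FF (seg (fun _ => 0) y) (j.unpair.2.unpair.2.unpair.2 + x.unpair.1))
      j.unpair.2.unpair.2.unpair.1) e j.unpair.2.unpair.1

theorem primrec_DD (e : ℕ) {j x y : α → ℕ} (hj : Primrec j) (hx : Primrec x) (hy : Primrec y) :
    PrimrecPred fun a => DD e (j a) (x a) (y a) := by
  unfold DD
  refine PrimrecPred.and (Primrec.nat_le.comp (primrec_unpair2 hx) hy) ?_
  refine primrec_Hs (primrec_FF (primrec_FF ?_ ?_) ?_) (Primrec.const e) ?_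
  · exact Primrec.list_map (Primrec.list_range.comp hy) (Primrec.const 0)
  · exact Primrec.nat_add.comp (primrec_unpair2 (primrec_unpair2 (primrec_unpair2 hj)))
      (primrec_unpair1 hx)
  · exact primrec_unpair1 (primrec_unpair2 (primrec_unpair2 hj))
  · exact primrec_unpair1 (primrec_unpair2 hj)

/-- `(N+1)/2^t ≤ q` where `m` codes `q`. -/
def GG (N t m : ℕ) : Prop :=
  m.unpair.1 % 2 = 0 ∧ 2 * (N + 1) * m.unpair.2 ≤ m.unpair.1 * 2 ^ t

theorem primrec_GG {N t m : α → ℕ} (hN : Primrec N) (ht : Primrec t) (hm : Primrec m) :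
    PrimrecPred fun a => GG (N a) (t a) (m a) := by
  unfold GG
  refine PrimrecPred.and ?_ ?_
  · exact Primrec.eq.comp (Primrec.nat_mod.comp (primrec_unpair1 hm) (Primrec.const 2))
      (Primrec.const 0)
  · exact Primrec.nat_le.comp
      (Primrec.nat_mul.comp (Primrec.nat_mul.comp (Primrec.const 2) (Primrec.succ.comp hN))
        (primrec_unpair2 hm))
      (Primrec.nat_mul.comp (primrec_unpair1 hm) (primrec_two_pow ht))

/-- Infinitely many `s` satisfy `TT` iff `∀ x, ∃ y, DD`. -/
def TT (e j s : ℕ) : Prop :=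
  (∀ x < s.unpair.1 + 1, ∃ y < s.unpair.2 + 1, DD e j x y) ∧
    ¬ ∀ x < s.unpair.1 + 1, ∃ y < s.unpair.2, DD e j x y

theorem primrec_TT (e : ℕ) {j s : α → ℕ} (hj : Primrec j) (hs : Primrec s) :
    PrimrecPred fun a => TT e (j a) (s a) := by
  unfold TT
  have h : ∀ b : ℕ, PrimrecPred fun a =>
      ∀ x < (s a).unpair.1 + 1, ∃ y < (s a).unpair.2 + b, DD e (j a) x y := by
    intro b
    refine primrecPred_forall_lt
      (R := fun a x => ∃ y < (s a).unpair.2 + b, DD e (j a) x y) ?_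
      (Primrec.succ.comp (primrec_unpair1 hs))
    refine primrecPred_exists_lt
      (R := fun (p : α × ℕ) y => DD e (j p.1) p.2 y) ?_
      (Primrec.nat_add.comp (primrec_unpair2 (hs.comp Primrec.fst)) (Primrec.const b))
    exact primrec_DD e (hj.comp (Primrec.fst.comp Primrec.fst)) (Primrec.snd.comp Primrec.fst)
      Primrec.snd
  exact (h 1).and (h 0).not

/-- The stage at which the `k`-th program halts. -/
def halts (k s : ℕ) : Prop := (evaln s (Denumerable.ofNat Code k) 0).isSome = true

theorem primrec_halts {k s : α → ℕ} (hk : Primrec k) (hs : Primrec s) :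
    PrimrecPred fun a => halts (k a) (s a) := by
  unfold halts
  refine primrecPred_isSome ?_
  exact Nat.Partrec.Code.primrec_evaln.comp (Primrec.pair (Primrec.pair hs
    ((Primrec.ofNat Code).comp hk)) (Primrec.const 0))

/-- The events; `a` is the value of the oracle up to `k + c`. -/
def EE (e c k a s : ℕ) : Prop :=
  s = 0 ∨ (∃ j < k + 1, GG (a / 2 ^ (k + c - j.unpair.1)) j.unpair.1 j.unpair.2.unpair.1 ∧
    TT e j s) ∨ (halts k s ∧ ¬ halts k (s - 1))

theorem primrec_EE (e c : ℕ) {k a s : α → ℕ} (hk : Primrec k) (ha : Primrec a) (hs : Primrec s) :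
    PrimrecPred fun p => EE e c (k p) (a p) (s p) := by
  unfold EE
  refine PrimrecPred.or (Primrec.eq.comp hs (Primrec.const 0)) (PrimrecPred.or ?_ ?_)
  · refine primrecPred_exists_lt
      (R := fun p j => GG (a p / 2 ^ (k p + c - j.unpair.1)) j.unpair.1 j.unpair.2.unpair.1 ∧
        TT e j (s p)) ?_ (Primrec.succ.comp hk)
    have hj : Primrec fun q : α × ℕ => q.2 := Primrec.snd
    refine PrimrecPred.and (primrec_GG ?_ (primrec_unpair1 hj)
      (primrec_unpair1 (primrec_unpair2 hj))) (primrec_TT e hj (hs.comp Primrec.fst))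
    refine Primrec.nat_div.comp (ha.comp Primrec.fst) (primrec_two_pow ?_)
    exact Primrec.nat_sub.comp (Primrec.nat_add.comp (hk.comp Primrec.fst) (Primrec.const c))
      (primrec_unpair1 hj)
  · exact (primrec_halts hk hs).and
      (primrec_halts hk (Primrec.nat_sub.comp hs (Primrec.const 1))).not

end primrec_lemmas

/-- The matrix of the domain of the machine. -/
def PP (e c r p w : ℕ) : Prop :=
  p.unpair.2 / 2 ^ p.unpair.1.unpair.1 ≠ r ∧
  (¬ EE e c p.unpair.1.unpair.1 p.unpair.2 p.unpair.1.unpair.2 ∨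
    (p.unpair.1.unpair.2 < w ∧ EE e c p.unpair.1.unpair.1 p.unpair.2 w))

theorem primrec_PP (e c r : ℕ) : PrimrecRel (PP e c r) := by
  unfold PP
  have hp : Primrec fun q : ℕ × ℕ => q.1 := Primrec.fst
  have hw : Primrec fun q : ℕ × ℕ => q.2 := Primrec.snd
  have h1 := primrec_unpair1 (primrec_unpair1 hp)
  have h2 := primrec_unpair2 (primrec_unpair1 hp)
  have h3 := primrec_unpair2 hp
  refine PrimrecPred.and (PrimrecPred.not ?_) (PrimrecPred.or ?_ (PrimrecPred.and ?_ ?_))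
  · exact Primrec.eq.comp (Primrec.nat_div.comp h3 (primrec_two_pow h1)) (Primrec.const r)
  · exact (primrec_EE e c h1 h3 h2).not
  · exact Primrec.nat_lt.comp h2 hw
  · exact primrec_EE e c h1 h3 hw

/-- The integer coded by the first `t` bits of `X`. -/
def NX (X : Cantor) : ℕ → ℕ
  | 0 => 0
  | t + 1 => 2 * NX X t + oX X t

theorem eval_comp_some {O : ℕ → ℕ} {f g : CodeO} {n a : ℕ} (h : g.eval O n = Part.some a) :
    (CodeO.comp f g).eval O n = f.eval O a := by
  change (g.eval O n).bind (f.eval O) = _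
  rw [h]
  exact Part.bind_some _ _

theorem eval_pair_some {O : ℕ → ℕ} {f g : CodeO} {n a b : ℕ} (hf : f.eval O n = Part.some a)
    (hg : g.eval O n = Part.some b) :
    (CodeO.pair f g).eval O n = Part.some (Nat.pair a b) := by
  simp [CodeO.eval, hf, hg, Seq.seq]

theorem exists_codeNX : ∃ d : CodeO, ∀ X p, d.eval (oX X) p = Part.some (NX X p.unpair.2) := by
  have h : Nat.Primrec fun p : ℕ => 2 * p.unpair.1 + p.unpair.2 := by
    apply Primrec.nat_iff.1
    exact Primrec.nat_add.comp (Primrec.nat_mul.comp (Primrec.const 2)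
      (primrec_unpair1 Primrec.id)) (primrec_unpair2 Primrec.id)
  obtain ⟨ad, had⟩ := exists_codeO (Nat.Partrec.of_primrec h)
  refine ⟨.prec .zero (.comp ad (.pair (.comp .right .right) (.comp .oracle (.comp .left .right)))),
    fun X p => ?_⟩
  rw [← Nat.pair_unpair p]
  generalize p.unpair.1 = a
  generalize p.unpair.2 = t
  rw [Nat.unpair_pair]
  induction t with
  | zero => simp [CodeO.eval]; rfl
  | succ t ih =>
    rw [CodeO.eval] at ih ⊢
    simp only [Nat.unpaired, Nat.unpair_pair] at ih ⊢
    rw [ih]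
    change (Part.some _).bind _ = _
    rw [Part.bind_some]
    have hr : ∀ x, CodeO.right.eval (oX X) x = Part.some x.unpair.2 := fun _ => rfl
    have hl : ∀ x, CodeO.left.eval (oX X) x = Part.some x.unpair.1 := fun _ => rfl
    have ho : ∀ x, CodeO.oracle.eval (oX X) x = Part.some (oX X x) := fun _ => rfl
    rw [eval_comp_some (eval_pair_some ((eval_comp_some (hr _)).trans (hr _))
      ((eval_comp_some ((eval_comp_some (hr _)).trans (hl _))).trans (ho _))), had]
    simp [NX]

theorem exists_machine (P : ℕ → ℕ → Prop) (hP : PrimrecRel P) (c : ℕ) : ∃ M : CodeO,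
    ∀ X n, (evalO X M n).Dom ↔ ∃ w, P (Nat.pair n (NX X (n.unpair.1 + c))) w := by
  obtain ⟨d, hd⟩ := exists_codeNX
  have h1 : Nat.Primrec fun n : ℕ => n.unpair.1 + c := by
    apply Primrec.nat_iff.1
    exact Primrec.nat_add.comp (primrec_unpair1 Primrec.id) (Primrec.const c)
  obtain ⟨ac, hac⟩ := exists_codeO (Nat.Partrec.of_primrec h1)
  have h2 : Partrec fun p : ℕ => Nat.rfind fun w => Part.some (decide (P p w)) := by
    apply Partrec.rfind
    have : Computable fun q : ℕ × ℕ => decide (P q.1 q.2) :=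
      (primrecRel_iff_primrec_decide.1 hP).to_comp
    exact this.partrec
  obtain ⟨g, hg⟩ := exists_codeO (Partrec.nat_iff.1 h2)
  refine ⟨.comp g (.pair (.pair .left .right) (.comp d (.pair .zero ac))), fun X n => ?_⟩
  have hr : ∀ x, CodeO.right.eval (oX X) x = Part.some x.unpair.2 := fun _ => rfl
  have hl : ∀ x, CodeO.left.eval (oX X) x = Part.some x.unpair.1 := fun _ => rfl
  have hz : ∀ x, CodeO.zero.eval (oX X) x = Part.some 0 := fun _ => rfl
  have ha : ac.eval (oX X) n = Part.some (n.unpair.1 + c) := by rw [hac]; rfl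
  unfold evalO
  rw [eval_comp_some (eval_pair_some (eval_pair_some (hl n) (hr n))
    ((eval_comp_some (eval_pair_some (hz n) ha)).trans (hd X _))), hg]
  refine Nat.rfind_dom.trans ?_
  constructor
  · rintro ⟨w, hw, -⟩
    exact ⟨w, by simpa using hw⟩
  · rintro ⟨w, hw⟩
    exact ⟨w, by simpa using hw, fun _ => trivial⟩

theorem TT_infinite_iff (e j : ℕ) : {s | TT e j s}.Infinite ↔ ∀ x, ∃ y, DD e j x y := by
  have huniq : ∀ s s', TT e j s → TT e j s' → s.unpair.1 = s'.unpair.1 →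
      ¬ s.unpair.2 < s'.unpair.2 := by
    intro s s' h h' heq hlt
    apply h'.2
    intro x hx
    rw [← heq] at hx
    obtain ⟨y, hy, hD⟩ := h.1 x hx
    exact ⟨y, by omega, hD⟩
  have hinj : Set.InjOn (fun s : ℕ => s.unpair.1) {s | TT e j s} := by
    intro s hs s' hs' heq
    have h1 := huniq s s' hs hs' heq
    have h2 := huniq s' s hs' hs heq.symm
    rw [← Nat.pair_unpair s, ← Nat.pair_unpair s']
    congr 1
    omega
  constructor
  · intro h x
    by_contra hx
    apply h
    refine Set.Finite.of_finite_image ?_ hinj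
    refine (Set.finite_lt_nat x).subset ?_
    rintro _ ⟨s, hs, rfl⟩
    change s.unpair.1 < x
    by_contra hlt
    obtain ⟨y, -, hD⟩ := hs.1 x (by omega)
    exact hx ⟨y, hD⟩
  · intro h
    have hex : ∀ x, ∃ s, TT e j s ∧ s.unpair.1 = x := by
      intro x
      have hb : ∃ b, ∀ x' < x + 1, ∃ y < b, DD e j x' y := by
        choose f hf using h
        refine ⟨(Finset.range (x + 1)).sup f + 1, fun x' hx' => ⟨f x', ?_, hf x'⟩⟩
        exact Nat.lt_succ_of_le (Finset.le_sup (f := f) (Finset.mem_range.2 hx'))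
      obtain ⟨hb1, hb2⟩ := And.intro (Nat.find_spec hb) (fun m hm => Nat.find_min hb (m := m) hm)
      generalize Nat.find hb = b at hb1 hb2
      rcases b with _ | b
      · obtain ⟨y, hy, -⟩ := hb1 0 (Nat.succ_pos _)
        omega
      · refine ⟨Nat.pair x b, ⟨?_, ?_⟩, by simp⟩
        · simpa using hb1
        · simpa using hb2 b (Nat.lt_succ_self b)
    choose g hg using hex
    refine Set.infinite_of_injective_forall_mem (f := g) ?_ (fun x => (hg x).1)
    intro a b hab
    rw [← (hg a).2, ← (hg b).2, hab]

theorem encode_rat (q : ℚ) : Encodable.encode q = Nat.pair (Encodable.encode q.num) q.den := rfl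

theorem GG_rat (N t : ℕ) (q : ℚ) :
    GG N t (Encodable.encode q) ↔ ((N : ℝ) + 1) / 2 ^ t ≤ q := by
  unfold GG
  rw [encode_rat, Nat.unpair_pair]
  have hd : (0 : ℝ) < q.den := by exact_mod_cast q.den_pos
  have hq : (q : ℝ) = q.num / q.den := by exact_mod_cast (Rat.num_div_den q).symm
  rw [hq, div_le_div_iff₀ (by positivity) hd]
  rcases hn : q.num with n | n
  · have : Encodable.encode (Int.ofNat n) = 2 * n := rfl
    rw [this]
    simp only [Nat.mul_mod_right, true_and]
    rw [mul_assoc, mul_assoc, Nat.mul_le_mul_left_iff (by norm_num)]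
    simp only [Int.ofNat_eq_natCast, Int.cast_natCast]
    exact_mod_cast Iff.rfl
  · have : Encodable.encode (Int.negSucc n) = 2 * n + 1 := rfl
    rw [this]
    constructor
    · intro h
      omega
    · intro h
      exfalso
      have h1 : ((Int.negSucc n : ℤ) : ℝ) < 0 := by exact_mod_cast Int.negSucc_lt_zero n
      have h2 : ((Int.negSucc n : ℤ) : ℝ) * 2 ^ t < 0 := mul_neg_of_neg_of_pos h1 (by positivity)
      have h3 : (0 : ℝ) ≤ ((N : ℝ) + 1) * q.den := by positivity
      linarith

theorem NX_div (X : Cantor) (t d : ℕ) : NX X (t + d) / 2 ^ d = NX X t := by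
  induction d with
  | zero => simp
  | succ d ih =>
    rw [← ih, pow_succ', ← Nat.div_div_eq_div_mul, ← add_assoc, NX]
    congr 1
    have : oX X (t + d) < 2 := by unfold oX; cases X (t + d) <;> simp
    omega

/-- `X`, read as a real, is below `α`. -/
def QQ (α : ℝ) (X : Cantor) : Prop := ∃ t, ((NX X t : ℝ) + 1) / 2 ^ t < α

theorem QQ_iff (α : ℝ) (e : ℕ) (he : ∀ m, m ∈ {m | ∃ q : ℚ, Encodable.encode q = m ∧ (q : ℝ) < α} ↔
    ∃ n t, ∀ s u, ∃ v, u ≤ v ∧ Hs (FF (FF (seg (fun _ => 0) v) (t + s)) n) e m) (X : Cantor) :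
    QQ α X ↔ ∃ j : ℕ, GG (NX X j.unpair.1) j.unpair.1 j.unpair.2.unpair.1 ∧
      {s | TT e j s}.Infinite := by
  constructor
  · rintro ⟨t, ht⟩
    obtain ⟨q, hq1, hq2⟩ := exists_rat_btwn ht
    obtain ⟨n, t', h⟩ := (he (Encodable.encode q)).1 ⟨q, rfl, hq2⟩
    refine ⟨Nat.pair t (Nat.pair (Encodable.encode q) (Nat.pair n t')), ?_, ?_⟩
    · simp only [Nat.unpair_pair]
      exact (GG_rat _ _ _).2 hq1.le
    · rw [TT_infinite_iff]
      intro x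
      simp only [DD, Nat.unpair_pair]
      exact h _ _
  · rintro ⟨j, hG, hT⟩
    rw [TT_infinite_iff] at hT
    have hm := (he j.unpair.2.unpair.1).2 ⟨j.unpair.2.unpair.2.unpair.1,
      j.unpair.2.unpair.2.unpair.2, fun s u => by
        simpa [DD] using hT (Nat.pair s u)⟩
    obtain ⟨q, hq, hlt⟩ := hm
    rw [← hq, GG_rat] at hG
    exact ⟨_, lt_of_le_of_lt hG hlt⟩

/-- The domain determined by an event relation. -/
def evDom (E : ℕ → ℕ → Prop) : Set ℕ :=
  {n | ¬ E n.unpair.1 n.unpair.2 ∨ ∃ w, n.unpair.2 < w ∧ E n.unpair.1 w}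

theorem evDom_cofinite (E : ℕ → ℕ → Prop) (j : ℕ) (h : ∀ k, j ≤ k → {s | E k s}.Infinite) :
    (evDom E)ᶜ.Finite := by
  have hmem : ∀ n, n ∈ (evDom E)ᶜ → E n.unpair.1 n.unpair.2 ∧
      ∀ w, n.unpair.2 < w → ¬ E n.unpair.1 w := by
    intro n hn
    have hn' : ¬ (¬ E n.unpair.1 n.unpair.2 ∨ ∃ w, n.unpair.2 < w ∧ E n.unpair.1 w) := hn
    push Not at hn'
    exact hn'
  refine Set.Finite.of_finite_image (f := fun n : ℕ => n.unpair.1) ?_ ?_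
  · refine (Set.finite_lt_nat j).subset ?_
    rintro _ ⟨n, hn, rfl⟩
    change n.unpair.1 < j
    by_contra hlt
    obtain ⟨w, hw, hlt'⟩ := (h n.unpair.1 (by omega)).exists_gt n.unpair.2
    exact (hmem n hn).2 w hlt' hw
  · intro n hn n' hn' heq
    have heq' : n.unpair.1 = n'.unpair.1 := heq
    have h1 := hmem n hn
    have h2 := hmem n' hn'
    have a1 : ¬ n.unpair.2 < n'.unpair.2 := fun hlt => h1.2 _ hlt (heq' ▸ h2.1)
    have a2 : ¬ n'.unpair.2 < n.unpair.2 := fun hlt => h2.2 _ hlt (heq' ▸ h1.1)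
    rw [← Nat.pair_unpair n, ← Nat.pair_unpair n', heq']
    congr 1
    omega

theorem halts_mono {k s s' : ℕ} (h : s ≤ s') (hs : halts k s) : halts k s' :=
  evaln_isSome_mono h hs

theorem evDom_noncomputable (E : ℕ → ℕ → Prop) (h : ∀ k, {s | E k s}.Finite) (h0 : ∀ k, E k 0)
    (hE : ∀ k s, halts k s → ¬ halts k (s - 1) → E k s) :
    ¬ ComputablePred fun n => n ∈ evDom E := by
  intro hc
  obtain ⟨f, hf, hfe⟩ := ComputablePred.computable_iff.1 hc
  have hfe' : ∀ n, n ∈ evDom E ↔ f n = true := fun n => by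
    have := congrFun hfe n
    exact iff_of_eq this
  -- each column has a last event
  have hlast : ∀ k, ∃ s, f (Nat.pair k s) = false := by
    intro k
    obtain ⟨s, hs, hmax⟩ := (h k).exists_maximal ⟨0, h0 k⟩
    refine ⟨s, ?_⟩
    rw [← Bool.not_eq_true, ← hfe']
    simp only [evDom, Set.mem_ofPred_eq, Nat.unpair_pair]
    push Not
    refine ⟨hs, fun w hw hEw => ?_⟩
    exact absurd (hmax hEw hw.le) (by omega)
  have hcorrect : ∀ k s, f (Nat.pair k s) = false → ((∃ s, halts k s) ↔ halts k s) := by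
    intro k s hs
    rw [← Bool.not_eq_true, ← hfe'] at hs
    simp only [evDom, Set.mem_ofPred_eq, Nat.unpair_pair] at hs
    push Not at hs
    refine ⟨fun hex => ?_, fun h => ⟨s, h⟩⟩
    have h1 := Nat.find_spec hex
    have h2 := fun m hm => Nat.find_min hex (m := m) hm
    generalize Nat.find hex = b at h1 h2
    have hb : E k b := by
      apply hE k b h1
      rcases b with _ | b
      · exfalso
        simp [halts, Nat.Partrec.Code.evaln] at h1
      · exact h2 b (Nat.lt_succ_self b)
    by_cases hsb : s < b
    · exact absurd hb (hs.2 b hsb)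
    · exact halts_mono (not_lt.1 hsb) h1
  have hL : Partrec fun k : ℕ => Nat.rfind fun s => Part.some (! f (Nat.pair k s)) := by
    apply Partrec.rfind
    have : Computable fun q : ℕ × ℕ => ! f (Nat.pair q.1 q.2) :=
      Primrec.not.to_comp.comp (hf.comp (Primrec₂.natPair.to_comp.comp Computable.fst
        Computable.snd))
    exact this.partrec
  have hdom : ∀ k, (Nat.rfind fun s => Part.some (! f (Nat.pair k s))).Dom := by
    intro k
    obtain ⟨s, hs⟩ := hlast k
    exact Nat.rfind_dom.2 ⟨s, by simp [hs], fun _ => trivial⟩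
  let L : ℕ → ℕ := fun k => (Nat.rfind fun s => Part.some (! f (Nat.pair k s))).get (hdom k)
  have hLc : Computable L := hL.of_eq fun k => by
    rw [PFun.coe_val, Part.some_get]
  have hLs : ∀ k, f (Nat.pair k (L k)) = false := by
    intro k
    have : L k ∈ Nat.rfind fun s => Part.some (! f (Nat.pair k s)) := Part.get_mem _
    have := (Nat.mem_rfind.1 this).1
    simpa using this
  apply ComputablePred.halting_problem 0
  rw [ComputablePred.computable_iff]
  refine ⟨fun c => (evaln (L (Encodable.encode c)) c 0).isSome, ?_, ?_⟩
  · have h3 : Computable fun c : Nat.Partrec.Code =>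
        (((L (Encodable.encode c), c), 0) : (ℕ × Nat.Partrec.Code) × ℕ) :=
      Computable.pair (Computable.pair (hLc.comp Computable.encode) Computable.id)
        (Computable.const 0)
    exact Primrec.option_isSome.to_comp.comp (Nat.Partrec.Code.primrec_evaln.to_comp.comp h3)
  · funext c
    apply propext
    have := hcorrect (Encodable.encode c) _ (hLs _)
    simp only [halts, Denumerable.ofNat_encode] at this
    rw [← this]
    constructor
    · intro hd
      obtain ⟨y, hy⟩ := Part.dom_iff_mem.1 hd
      obtain ⟨s, hs⟩ := Nat.Partrec.Code.evaln_complete.1 hy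
      exact ⟨s, Option.isSome_iff_exists.2 ⟨y, hs⟩⟩
    · rintro ⟨s, hs⟩
      obtain ⟨y, hy⟩ := Option.isSome_iff_exists.1 hs
      exact Part.dom_iff_mem.2 ⟨y, Nat.Partrec.Code.evaln_sound hy⟩

theorem computable_of_compl_finite {S : Set ℕ} (h : Sᶜ.Finite) :
    ComputablePred fun n => n ∈ S := by
  have h1 : PrimrecPred fun n : ℕ => ∃ a ∈ h.toFinset.toList, a = n :=
    (Primrec.eq (α := ℕ)).exists_mem_list.comp (Primrec.const _) Primrec.id
  have h2 : PrimrecPred fun n => n ∈ S := h1.not.of_eq fun n => by simp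
  exact ⟨_, h2.choose_spec.to_comp⟩

theorem exists_good_machine (α : ℝ) (hα : LeftCeIn (iterJump 2) α) (c r : ℕ) :
    ∃ M : CodeO, ∀ X : Cantor,
      (NX X c = r → ∀ n, ¬ (evalO X M n).Dom) ∧
      (NX X c ≠ r → QQ α X → (domSet M X)ᶜ.Finite) ∧
      (NX X c ≠ r → ¬ QQ α X → ¬ ComputablePred fun n => n ∈ domSet M X) := by
  obtain ⟨e, he⟩ := sigma3 hα
  obtain ⟨M, hM⟩ := exists_machine (PP e c r) (primrec_PP e c r) c
  refine ⟨M, fun X => ?_⟩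
  have hg : ∀ k, NX X (k + c) / 2 ^ k = NX X c := fun k => by rw [add_comm, NX_div]
  have hM := hM X
  simp only [PP, Nat.unpair_pair, hg] at hM
  have hdom : NX X c ≠ r → domSet M X = evDom fun k s => EE e c k (NX X (k + c)) s := by
    intro hne
    ext n
    rw [domSet, Set.mem_ofPred_eq, hM, evDom, Set.mem_ofPred_eq]
    simp only [hne, ne_eq, not_false_eq_true, true_and, exists_or, exists_const]
  have hN : ∀ k j, j < k + 1 → NX X (k + c) / 2 ^ (k + c - j.unpair.1) = NX X j.unpair.1 := by
    intro k j hj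
    have : j.unpair.1 ≤ j := Nat.unpair_left_le j
    have h2 := NX_div X j.unpair.1 (k + c - j.unpair.1)
    rwa [Nat.add_sub_cancel' (by omega)] at h2
  have hQ := QQ_iff α e he X
  refine ⟨?_, ?_, ?_⟩
  · intro h n hd
    obtain ⟨w, hw, -⟩ := (hM n).1 hd
    exact hw h
  · intro hne hq
    rw [hdom hne]
    obtain ⟨j, hG, hT⟩ := hQ.1 hq
    refine evDom_cofinite _ j fun k hk => hT.mono ?_
    intro s hs
    refine Or.inr (Or.inl ⟨j, by omega, ?_, hs⟩)
    rw [hN k j (by omega)]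
    exact hG
  · intro hne hq
    rw [hdom hne]
    apply evDom_noncomputable
    · intro k
      have hsub : {s | EE e c k (NX X (k + c)) s} ⊆ {0} ∪ ((⋃ j ∈ Finset.range (k + 1),
          {s | GG (NX X j.unpair.1) j.unpair.1 j.unpair.2.unpair.1 ∧ TT e j s}) ∪
          {s | halts k s ∧ ¬ halts k (s - 1)}) := by
        intro s hs
        rcases hs with hs | ⟨j, hj, hG, hT⟩ | hs
        · exact Or.inl hs
        · rw [hN k j hj] at hG
          refine Or.inr (Or.inl ?_)
          simp only [Set.mem_iUnion]
          exact ⟨j, Finset.mem_range.2 hj, hG, hT⟩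
        · exact Or.inr (Or.inr hs)
      refine Set.Finite.subset (Set.Finite.union (Set.finite_singleton 0)
        (Set.Finite.union ?_ ?_)) hsub
      · refine Set.Finite.biUnion (Finset.finite_toSet _) fun j _ => ?_
        by_contra hinf
        apply hq
        rw [hQ]
        obtain ⟨s, hs⟩ := Set.Infinite.nonempty hinf
        exact ⟨j, hs.1, Set.Infinite.mono (fun s hs => hs.2) hinf⟩
      · apply Set.Subsingleton.finite
        have : ∀ s s', (halts k s ∧ ¬ halts k (s - 1)) → (halts k s' ∧ ¬ halts k (s' - 1)) →
            ¬ s < s' := fun s s' h h' hlt => h'.2 (halts_mono (by omega) h.1)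
        intro s hs s' hs'
        have h1 := this s s' hs hs'
        have h2 := this s' s hs' hs
        omega
    · exact fun k => Or.inl rfl
    · exact fun k s h1 h2 => Or.inr (Or.inr ⟨h1, h2⟩)

theorem NX_digits (x : ℝ) (h0 : 0 ≤ x) (h1 : x < 1) (t : ℕ) :
    (NX (digits x) t : ℤ) = ⌊x * 2 ^ t⌋ := by
  induction t with
  | zero =>
    simp only [NX, pow_zero, mul_one, Nat.cast_zero]
    exact (Int.floor_eq_zero_iff.2 ⟨h0, h1⟩).symm
  | succ t ih =>
    have hd : ⌊x * 2 ^ (t + 1)⌋ / 2 = ⌊x * 2 ^ t⌋ := by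
      have h := Int.floor_div_natCast (x * 2 ^ (t + 1)) 2
      rw [Nat.cast_ofNat, Nat.cast_ofNat] at h
      rw [← h]
      congr 1
      rw [pow_succ]
      ring
    have ho : (oX (digits x) t : ℤ) = ⌊x * 2 ^ (t + 1)⌋ % 2 := by
      unfold oX digits
      by_cases h : ⌊x * 2 ^ (t + 1)⌋ % 2 = 1
      · simp [h]
      · have h2 : ⌊x * 2 ^ (t + 1)⌋ % 2 = 0 := by omega
        simp [h2]
    rw [NX]
    push_cast
    rw [ih, ho, ← hd]
    omega

theorem QQ_digits (α x : ℝ) (h0 : 0 ≤ x) (h1 : x < 1) : QQ α (digits x) ↔ x < α := by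
  have hN : ∀ t, (NX (digits x) t : ℝ) = (⌊x * 2 ^ t⌋ : ℤ) := fun t => by
    rw [← NX_digits x h0 h1 t]
    simp
  constructor
  · rintro ⟨t, ht⟩
    rw [hN] at ht
    refine lt_of_lt_of_le ?_ ht.le
    rw [lt_div_iff₀ (by positivity)]
    exact Int.lt_floor_add_one _
  · intro h
    obtain ⟨t, ht⟩ := exists_pow_lt_of_lt_one (sub_pos.2 h) (by norm_num : (2 : ℝ)⁻¹ < 1)
    refine ⟨t, ?_⟩
    rw [hN]
    have h2 : (0 : ℝ) < 2 ^ t := by positivity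
    have h3 : ((⌊x * 2 ^ t⌋ : ℤ) : ℝ) ≤ x * 2 ^ t := Int.floor_le _
    rw [div_lt_iff₀ h2]
    rw [inv_pow, inv_lt_iff_one_lt_mul₀ h2] at ht
    nlinarith

theorem measurable_digits : Measurable digits := by
  refine measurable_pi_lambda _ fun n => ?_
  unfold digits
  have h : Measurable fun x : ℝ => ⌊x * 2 ^ (n + 1)⌋ :=
    Int.measurable_floor.comp (measurable_id.mul_const _)
  exact (measurable_from_top (f := fun z : ℤ => decide (z % 2 = 1))).comp h

theorem measurable_NX (t : ℕ) : Measurable fun X : Cantor => NX X t := by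
  induction t with
  | zero => exact measurable_const
  | succ t ih =>
    have h : Measurable fun X : Cantor => oX X t :=
      (measurable_from_top (f := fun b : Bool => cond b 1 0)).comp (measurable_pi_apply t)
    exact (ih.const_mul 2).add h

theorem measurableSet_QQ (α : ℝ) : MeasurableSet {X : Cantor | QQ α X} := by
  have : {X : Cantor | QQ α X} = ⋃ t, (fun X : Cantor => NX X t) ⁻¹'
      {N : ℕ | ((N : ℝ) + 1) / 2 ^ t < α} := by
    ext X
    simp [QQ]
  rw [this]
  exact MeasurableSet.iUnion fun t => measurable_NX t (MeasurableSet.of_discrete)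

theorem muR_eq (α : ℝ) (h0 : 0 < α) (h1 : α < 1) (S : Set Cantor) (hS : MeasurableSet S)
    (h : ∀ x : ℝ, 0 ≤ x → x < 1 → (digits x ∈ S ↔ x < α)) : muR S = α := by
  unfold muR mu
  rw [Measure.map_apply measurable_digits hS,
    Measure.restrict_apply (measurable_digits hS)]
  have : digits ⁻¹' S ∩ Set.Ico 0 1 = Set.Ico 0 α := by
    ext x
    constructor
    · rintro ⟨hx, hx0, hx1⟩
      exact ⟨hx0, (h x hx0 hx1).1 hx⟩
    · rintro ⟨hx0, hx1⟩
      exact ⟨(h x hx0 (hx1.trans h1)).2 hx1, hx0, hx1.trans h1⟩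
  rw [this, Real.volume_Ico, sub_zero, ENNReal.toReal_ofReal h0.le]

theorem extends_replicate {X : Cantor} {c : ℕ} {b : Bool} (h : Extends X (List.replicate c b)) :
    ∀ i < c, X i = b := by
  intro i hi
  unfold Extends initSeg at h
  rw [List.length_replicate] at h
  exact List.eq_of_mem_replicate (h ▸ List.mem_map.2 ⟨i, List.mem_range.2 hi, rfl⟩)

theorem NX_false {X : Cantor} (c : ℕ) (h : ∀ i < c, X i = false) : NX X c = 0 := by
  induction c with
  | zero => rfl
  | succ c ih =>
    rw [NX, ih fun i hi => h i (by omega), oX, h c (by omega)]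
    rfl

theorem NX_true {X : Cantor} (c : ℕ) (h : ∀ i < c, X i = true) : NX X c + 1 = 2 ^ c := by
  induction c with
  | zero => rfl
  | succ c ih =>
    have := ih fun i hi => h i (by omega)
    rw [NX, oX, h c (by omega), pow_succ, ← this]
    simp only [cond_true]
    ring

/-- **Oracle machines with prescribed cofiniteness and computability probability.**
If `α ∈ (0,1)` is a `∅''`-left-c.e. real and `α + 2^{-c} < 1`, then there are an oracle
machine `M` and a string `ρ` of length `c` such that `M` diverges everywhere on every
oracle compatible with `ρ` (equivalently, on every oracle extending `ρ`) and
`μ(COF(M)) = α`; similarly, if `2^{-c} < α` there are such `M'` and `ρ'` with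
`μ(COM(M')) = α`. -/
theorem prescribed_cof_com_probability (α : ℝ) (h0 : 0 < α) (h1 : α < 1)
    (hα : LeftCeIn (iterJump 2) α) :
    (∀ c : ℕ, α + (2 : ℝ)⁻¹ ^ c < 1 →
      ∃ (M : CodeO) (ρ : List Bool), ρ.length = c ∧
        (∀ X : Cantor, Extends X ρ → ∀ n, ¬ (evalO X M n).Dom) ∧
        muR (COF M) = α) ∧
    (∀ c : ℕ, (2 : ℝ)⁻¹ ^ c < α →
      ∃ (M' : CodeO) (ρ' : List Bool), ρ'.length = c ∧
        (∀ X : Cantor, Extends X ρ' → ∀ n, ¬ (evalO X M' n).Dom) ∧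
        muR (COM M') = α) := by
  constructor
  · intro c hc
    obtain ⟨M, hM⟩ := exists_good_machine α hα c (2 ^ c - 1)
    refine ⟨M, List.replicate c true, List.length_replicate, fun X hX => ?_, ?_⟩
    · apply (hM X).1
      have := NX_true c (extends_replicate hX)
      omega
    · have hset : COF M = {X | NX X c ≠ 2 ^ c - 1} ∩ {X | QQ α X} := by
        ext X
        obtain ⟨ha, hb, hd⟩ := hM X
        constructor
        · intro hX
          have hne : NX X c ≠ 2 ^ c - 1 := by
            intro heq
            have hX' : (domSet M X)ᶜ.Finite := hX
            have he : domSet M X = ∅ := Set.eq_empty_iff_forall_notMem.2 (ha heq)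
            rw [he, Set.compl_empty] at hX'
            exact Set.infinite_univ hX'
          refine ⟨hne, ?_⟩
          by_contra hq
          exact hd hne hq (computable_of_compl_finite hX)
        · rintro ⟨h2, h3⟩
          exact hb h2 h3
      rw [hset]
      refine muR_eq α h0 h1 _ ?_ ?_
      · exact (measurable_NX c (MeasurableSet.of_discrete (s := {N | N ≠ 2 ^ c - 1}))).inter
          (measurableSet_QQ α)
      · intro x hx0 hx1
        rw [Set.mem_inter_iff, Set.mem_ofPred_eq, Set.mem_ofPred_eq, QQ_digits α x hx0 hx1]
        refine ⟨fun h => h.2, fun h => ⟨fun heq => ?_, h⟩⟩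
        have hp : 0 < 2 ^ c := Nat.two_pow_pos c
        have h2 : NX (digits x) c + 1 = 2 ^ c := by omega
        have h3 : (NX (digits x) c : ℤ) ≤ ⌊x * 2 ^ c⌋ := (NX_digits x hx0 hx1 c).le
        rw [Int.le_floor] at h3
        have h4 : (NX (digits x) c : ℝ) + 1 = 2 ^ c := by exact_mod_cast h2
        have h5 : (0 : ℝ) < 2 ^ c := by positivity
        have h6 : (2 : ℝ)⁻¹ ^ c * 2 ^ c = 1 := by rw [← mul_pow]; norm_num
        push_cast at h3
        nlinarith
  · intro c hc
    obtain ⟨M, hM⟩ := exists_good_machine α hα c 0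
    refine ⟨M, List.replicate c false, List.length_replicate, fun X hX => ?_, ?_⟩
    · exact (hM X).1 (NX_false c (extends_replicate hX))
    · have hset : COM M = {X | NX X c = 0} ∪ {X | QQ α X} := by
        ext X
        obtain ⟨ha, hb, hd⟩ := hM X
        constructor
        · intro hX
          by_contra hn
          rw [Set.mem_union, not_or] at hn
          exact hd hn.1 hn.2 hX
        · intro h
          by_cases heq : NX X c = 0
          · have he : domSet M X = ∅ := Set.eq_empty_iff_forall_notMem.2 (ha heq)
            have h2 : ComputablePred fun n : ℕ => n ∈ domSet M X := by
              rw [he]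
              have h3 := (computable_of_compl_finite (S := Set.univ) (by simp)).not
              exact h3.of_eq fun n => by simp
            exact h2
          · exact computable_of_compl_finite (hb heq (h.resolve_left heq))
      rw [hset]
      refine muR_eq α h0 h1 _ ?_ ?_
      · exact (measurable_NX c (MeasurableSet.of_discrete (s := {N | N = 0}))).union
          (measurableSet_QQ α)
      · intro x hx0 hx1
        rw [Set.mem_union, Set.mem_ofPred_eq, Set.mem_ofPred_eq, QQ_digits α x hx0 hx1]
        refine ⟨fun h => h.elim (fun heq => ?_) id, Or.inr⟩
        have h3 := NX_digits x hx0 hx1 c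
        rw [heq] at h3
        have h4 := Int.lt_floor_add_one (x * 2 ^ c)
        rw [← h3] at h4
        have h5 : (0 : ℝ) < 2 ^ c := by positivity
        have h6 : (2 : ℝ)⁻¹ ^ c * 2 ^ c = 1 := by rw [← mul_pow]; norm_num
        push_cast at h4
        nlinarith

end RandProb
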